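/- Let α ∈ (0,1), β ∈ (0,1], λ > 0, ξ > 0 and t > 0. Define the state probabilities of the space-time Mittag-Leffler process by p_n(t) = the n-th Taylor coefficient at u = 0 of the function u ↦ E_β( −ξ t^β (λ+1)(1−u)^α / (λ + (1−u)^α) ). Then p_n(t) has the fat-tailed large-n asymptotics lim_{n→∞} n^{α+1} · p_n(t) = α(λ+1) ξ t^β / (λ Γ(1−α) Γ(1+β)). -/

import Mathlib

/-- Mittag-Leffler function `E_β(z) = Σ_{m=0}^∞ z^m / Γ(β m + 1)`. -/
noncomputable def mittagLefflerOne (β z : ℝ) : ℝ :=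
  ∑' m : ℕ, z ^ m / Real.Gamma (β * m + 1)

open Filter Topology PowerSeries Finset

/-- The coefficients of `a` are bounded by `M (n+1)^{-s}`. -/
def TailBound (s : ℝ) (a : PowerSeries ℝ) (M : ℝ) : Prop :=
  ∀ n : ℕ, |coeff n a| * ((n : ℝ) + 1) ^ s ≤ M

/-- The coefficients of `a` are asymptotic to `L (n+1)^{-s}`. -/
def HasTail (s : ℝ) (a : PowerSeries ℝ) (L : ℝ) : Prop :=
  Tendsto (fun n : ℕ => ((n : ℝ) + 1) ^ s * coeff n a) atTop (𝓝 L)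

/-- The sum of the power series `a` at the real number `u`. -/
noncomputable def seriesEval (a : PowerSeries ℝ) (u : ℝ) : ℝ := ∑' n, coeff n a * u ^ n

/-- The power series `∑ e_m a^m`, formed coefficientwise. -/
noncomputable def seriesComp (e : ℕ → ℝ) (a : PowerSeries ℝ) : PowerSeries ℝ :=
  PowerSeries.mk fun n => ∑' m, e m * coeff n (a ^ m)

lemma HasTail.exists_tailBound {s L : ℝ} {a : PowerSeries ℝ} (h : HasTail s a L) :
    ∃ M, TailBound s a M := by
  obtain ⟨C, hC⟩ := (Metric.isBounded_range_of_tendsto _ h).exists_norm_le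
  refine ⟨C, fun n => ?_⟩
  have := hC _ ⟨n, rfl⟩
  rw [Real.norm_eq_abs, abs_mul, abs_of_nonneg (by positivity)] at this
  linarith

lemma summable_nat_add_one_rpow_neg {s : ℝ} (hs : 1 < s) :
    Summable fun n : ℕ => ((n : ℝ) + 1) ^ (-s) := by
  refine ((Real.summable_one_div_nat_add_rpow 1 s).2 hs).congr fun n => ?_
  rw [abs_of_nonneg (by positivity), Real.rpow_neg (by positivity), one_div]

lemma TailBound.nonneg {s M : ℝ} {a : PowerSeries ℝ} (h : TailBound s a M) : 0 ≤ M :=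
  le_trans (by positivity) (h 0)

lemma TailBound.abs_le {s M : ℝ} {a : PowerSeries ℝ} (h : TailBound s a M) (n : ℕ) :
    |coeff n a| ≤ M * ((n : ℝ) + 1) ^ (-s) := by
  rw [Real.rpow_neg (by positivity), ← div_eq_mul_inv, le_div_iff₀ (by positivity)]
  exact h n

lemma TailBound.summable_abs {s M : ℝ} {a : PowerSeries ℝ} (h : TailBound s a M) (hs : 1 < s) :
    Summable fun n => |coeff n a| :=
  .of_nonneg_of_le (fun _ => abs_nonneg _) h.abs_le
    ((summable_nat_add_one_rpow_neg hs).mul_left M)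

lemma TailBound.tsum_abs_le {s M : ℝ} {a : PowerSeries ℝ} (h : TailBound s a M) (hs : 1 < s) :
    ∑' n, |coeff n a| ≤ M * ∑' n : ℕ, ((n : ℝ) + 1) ^ (-s) := by
  rw [← tsum_mul_left]
  exact (h.summable_abs hs).tsum_le_tsum h.abs_le ((summable_nat_add_one_rpow_neg hs).mul_left M)

/-- If `i + 1` is at least the fraction `θ` of `n + 1`, the bound at `i` transfers to `n`. -/
lemma TailBound.abs_mul_le_of_le {s M θ : ℝ} {a : PowerSeries ℝ} (h : TailBound s a M)
    (hs : 0 ≤ s) (hθ : 0 < θ) {i n : ℕ} (hi : θ * ((n : ℝ) + 1) ≤ i + 1) :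
    |coeff i a| * ((n : ℝ) + 1) ^ s ≤ M * θ ^ (-s) := by
  rw [Real.rpow_neg hθ.le, ← div_eq_mul_inv, le_div_iff₀ (by positivity), mul_assoc,
    ← Real.mul_rpow (by positivity) hθ.le]
  refine le_trans ?_ (h i)
  gcongr
  linarith

/-- Coefficient bound for a product, splitting each convolution sum at the fraction `θ`. -/
lemma TailBound.mul_of_split {s A B θ : ℝ} {a b : PowerSeries ℝ} (ha : TailBound s a A)
    (hb : TailBound s b B) (hs : 1 < s) (hθ : 0 < θ) (hθ' : θ < 1) :
    TailBound s (a * b)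
      (A * θ ^ (-s) * ∑' n, |coeff n b| + B * (1 - θ) ^ (-s) * ∑' n, |coeff n a|) := by
  intro n
  have hs0 : 0 ≤ s := by linarith
  have key : ∀ p ∈ antidiagonal n, |coeff p.1 a * coeff p.2 b| * ((n : ℝ) + 1) ^ s ≤
      A * θ ^ (-s) * |coeff p.2 b| + B * (1 - θ) ^ (-s) * |coeff p.1 a| := by
    rintro ⟨i, j⟩ hp
    have hij : (i : ℝ) + j = n := by exact_mod_cast mem_antidiagonal.1 hp
    have hA := ha.nonneg
    have hB := hb.nonneg
    have h1θ : 0 < 1 - θ := by linarith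
    rw [abs_mul]
    by_cases hi : θ * ((n : ℝ) + 1) ≤ i + 1
    · have := mul_le_mul_of_nonneg_right (ha.abs_mul_le_of_le hs0 hθ hi) (abs_nonneg (coeff j b))
      have : 0 ≤ B * (1 - θ) ^ (-s) * |coeff i a| := by positivity
      dsimp only
      linarith
    · have hj : (1 - θ) * ((n : ℝ) + 1) ≤ j + 1 := by linarith
      have := mul_le_mul_of_nonneg_right (hb.abs_mul_le_of_le hs0 h1θ hj) (abs_nonneg (coeff i a))
      have : 0 ≤ A * θ ^ (-s) * |coeff j b| := by positivity
      dsimp only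
      linarith
  have hA := ha.nonneg
  have hB := hb.nonneg
  have h1θ : 0 < 1 - θ := by linarith
  calc |coeff n (a * b)| * ((n : ℝ) + 1) ^ s
      ≤ ∑ p ∈ antidiagonal n, |coeff p.1 a * coeff p.2 b| * ((n : ℝ) + 1) ^ s := by
        rw [coeff_mul, ← sum_mul]
        gcongr
        exact abs_sum_le_sum_abs _ _
    _ ≤ _ := sum_le_sum key
    _ = A * θ ^ (-s) * ∑ j ∈ range (n + 1), |coeff j b| +
        B * (1 - θ) ^ (-s) * ∑ i ∈ range (n + 1), |coeff i a| := by
        rw [sum_add_distrib, ← mul_sum, ← mul_sum,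
          Nat.sum_antidiagonal_eq_sum_range_succ (fun i _ => |coeff i a|),
          ← Nat.sum_antidiagonal_swap]
        simp only [Prod.snd_swap]
        rw [Nat.sum_antidiagonal_eq_sum_range_succ (fun i _ => |coeff i b|)]
    _ ≤ _ := by
        gcongr
        · exact (hb.summable_abs hs).sum_le_tsum _ fun _ _ => abs_nonneg _
        · exact (ha.summable_abs hs).sum_le_tsum _ fun _ _ => abs_nonneg _

lemma tailBound_one (s : ℝ) : TailBound s 1 1 := by
  intro n
  rcases eq_or_ne n 0 with rfl | hn <;> simp [coeff_one, *]

lemma TailBound.pow {s M : ℝ} {a : PowerSeries ℝ} (h : TailBound s a M) (hs : 1 < s) (m : ℕ) :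
    TailBound s (a ^ m) ((2 * 2 ^ s * (∑' n : ℕ, ((n : ℝ) + 1) ^ (-s)) * M) ^ m) := by
  induction m with
  | zero => simpa using tailBound_one s
  | succ m ih =>
    rw [pow_succ]
    intro n
    refine (ih.mul_of_split h hs (θ := 1 / 2) (by norm_num) (by norm_num) n).trans ?_
    have h2 : (1 / 2 : ℝ) ^ (-s) = 2 ^ s := by
      rw [one_div, Real.inv_rpow (by norm_num), Real.rpow_neg (by norm_num), inv_inv]
    have h2' : (1 - 1 / 2 : ℝ) ^ (-s) = 2 ^ s := by rw [← h2]; norm_num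
    rw [h2, h2']
    have := h.nonneg
    have := ih.nonneg
    have e1 := h.tsum_abs_le hs
    have e2 := ih.tsum_abs_le hs
    rw [pow_succ]
    set K := (2 * 2 ^ s * (∑' n : ℕ, ((n : ℝ) + 1) ^ (-s)) * M) ^ m
    calc _ ≤ K * 2 ^ s * (M * ∑' n : ℕ, ((n : ℝ) + 1) ^ (-s)) +
          M * 2 ^ s * (K * ∑' n : ℕ, ((n : ℝ) + 1) ^ (-s)) := by gcongr
      _ = _ := by ring

/-- Polynomial growth of the tail constants of the powers of a series of total mass at most one. -/
lemma TailBound.pow_of_tsum_abs_le_one {s M : ℝ} {a : PowerSeries ℝ} (h : TailBound s a M)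
    (hM : 1 ≤ M) (hs : 1 < s) (ha : ∀ m, ∑' n, |coeff n (a ^ m)| ≤ 1) (m : ℕ) :
    TailBound s (a ^ m) (M * ((m : ℝ) + 1) ^ (s + 1)) := by
  induction m with
  | zero =>
    intro n
    simpa using (tailBound_one s n).trans hM
  | succ m ih =>
    rw [pow_succ]
    intro n
    have hθ : ((m : ℝ) + 1) / (m + 2) < 1 := by
      rw [div_lt_one (by positivity)]; linarith
    refine (ih.mul_of_split h hs (θ := ((m : ℝ) + 1) / (m + 2)) (by positivity) hθ n).trans ?_
    have h1 : 1 - ((m : ℝ) + 1) / (m + 2) = 1 / (m + 2) := by field_simp; ring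
    have h1a := ha 1
    rw [pow_one] at h1a
    have hinv : ∀ x : ℝ, 0 ≤ x → x ^ (-s) = (x⁻¹) ^ s := fun x hx => by
      rw [Real.inv_rpow hx, Real.rpow_neg hx]
    rw [h1, hinv _ (by positivity), hinv _ (by positivity), inv_div, one_div, inv_inv,
      Real.div_rpow (by positivity) (by positivity)]
    calc _ ≤ M * ((m : ℝ) + 1) ^ (s + 1) * (((m : ℝ) + 2) ^ s / ((m : ℝ) + 1) ^ s) * 1
          + M * ((m : ℝ) + 2) ^ s * 1 := by
          gcongr
          exact ha m
      _ = _ := by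
        push_cast
        rw [show (m : ℝ) + 1 + 1 = m + 2 by ring, Real.rpow_add_one (by positivity),
          Real.rpow_add_one (by positivity)]
        field_simp
        ring

lemma tendsto_shift_div_rpow (s : ℝ) (i : ℕ) :
    Tendsto (fun n : ℕ => (((n + i : ℕ) : ℝ) + 1) ^ s / ((n : ℝ) + 1) ^ s) atTop (𝓝 1) := by
  have h : Tendsto (fun n : ℕ => 1 + (i : ℝ) * (1 / ((n : ℝ) + 1))) atTop (𝓝 (1 + i * 0)) :=
    (tendsto_one_div_add_atTop_nhds_zero_nat.const_mul _).const_add 1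
  have h' := h.rpow_const (p := s) (Or.inl (by simp))
  simp only [mul_zero, add_zero, Real.one_rpow] at h'
  refine h'.congr fun n => ?_
  rw [← Real.div_rpow (by positivity) (by positivity)]
  congr 1
  push_cast
  field_simp
  ring

lemma HasTail.tendsto_sub {s L : ℝ} {b : PowerSeries ℝ} (hb : HasTail s b L) (i : ℕ) :
    Tendsto (fun n : ℕ => ((n : ℝ) + 1) ^ s * coeff (n - i) b) atTop (𝓝 L) := by
  rw [← tendsto_add_atTop_iff_nat i]
  have := (tendsto_shift_div_rpow s i).mul hb
  rw [one_mul] at this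
  refine this.congr fun n => ?_
  rw [Nat.add_sub_cancel, ← mul_assoc, div_mul_cancel₀ _ (by positivity)]

/-- Asymptotics of the part of a convolution sum in which the first index is at most half. -/
lemma HasTail.tendsto_half_convolution {s L : ℝ} {a b : PowerSeries ℝ} (hs : 0 ≤ s)
    (ha : Summable fun n => |coeff n a|) (hb : HasTail s b L) (P : ℕ → ℕ → Prop)
    [∀ n i, Decidable (P n i)] (hP : ∀ n i, P n i → 2 * i ≤ n) (hP' : ∀ i, ∀ᶠ n in atTop, P n i) :
    Tendsto (fun n : ℕ => ((n : ℝ) + 1) ^ s *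
      ∑ i ∈ range (n + 1), if P n i then coeff i a * coeff (n - i) b else 0) atTop
      (𝓝 ((∑' i, coeff i a) * L)) := by
  obtain ⟨M, hM⟩ := hb.exists_tailBound
  have hM0 := hM.nonneg
  have key : Tendsto (fun n : ℕ => ∑' i, if P n i then
      coeff i a * (((n : ℝ) + 1) ^ s * coeff (n - i) b) else 0) atTop
      (𝓝 (∑' i, coeff i a * L)) := by
    refine tendsto_tsum_of_dominated_convergence
      (bound := fun i => |coeff i a| * (M * (1 / 2) ^ (-s))) (ha.mul_right _) ?_ ?_
    · intro i
      refine ((hb.tendsto_sub i).const_mul (coeff i a)).congr' ?_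
      filter_upwards [hP' i] with n hn
      rw [if_pos hn]
    · refine Eventually.of_forall fun n i => ?_
      split_ifs with h
      · have h2 := hP n i h
        rw [norm_mul, norm_mul, Real.norm_eq_abs, Real.norm_eq_abs, Real.norm_eq_abs,
          abs_of_nonneg (a := ((n : ℝ) + 1) ^ s) (by positivity), mul_comm (((n : ℝ) + 1) ^ s)]
        refine mul_le_mul_of_nonneg_left ?_ (abs_nonneg _)
        refine hM.abs_mul_le_of_le (θ := 1 / 2) hs (by norm_num) ?_
        have h3 : (2 : ℝ) * i ≤ n := by exact_mod_cast h2
        rw [Nat.cast_sub (by omega)]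
        linarith
      · rw [norm_zero]; positivity
  rw [tsum_mul_right] at key
  refine key.congr fun n => ?_
  rw [tsum_eq_sum (s := range (n + 1)), mul_sum]
  · refine sum_congr rfl fun i _ => ?_
    split_ifs <;> ring
  · intro i hi
    rw [if_neg]
    intro h
    have := hP n i h
    simp at hi
    omega

lemma HasTail.mul {s A B : ℝ} {a b : PowerSeries ℝ} (hs : 1 < s)
    (ha : HasTail s a A) (hb : HasTail s b B) :
    HasTail s (a * b) ((∑' n, coeff n a) * B + (∑' n, coeff n b) * A) := by
  obtain ⟨M, hM⟩ := ha.exists_tailBound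
  obtain ⟨N, hN⟩ := hb.exists_tailBound
  have hs0 : 0 ≤ s := by linarith
  have h1 := hb.tendsto_half_convolution hs0 (hM.summable_abs hs) (fun n i => 2 * i ≤ n)
    (fun _ _ h => h) (fun i => eventually_ge_atTop _)
  have h2 := ha.tendsto_half_convolution hs0 (hN.summable_abs hs) (fun n i => 2 * i < n)
    (fun _ _ h => h.le) (fun i => eventually_gt_atTop _)
  refine (h1.add h2).congr fun n => ?_
  rw [← mul_add, coeff_mul,
    Nat.sum_antidiagonal_eq_sum_range_succ (fun i j => coeff i a * coeff j b),
    ← sum_range_reflect (fun i => if 2 * i < n then coeff i b * coeff (n - i) a else 0),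
    ← sum_add_distrib]
  congr 1
  refine sum_congr rfl fun i hi => ?_
  have hi' : i ≤ n := by simpa [Nat.lt_succ_iff] using hi
  rw [show n + 1 - 1 - i = n - i by omega, Nat.sub_sub_self hi']
  by_cases h : 2 * i ≤ n
  · rw [if_pos h, if_neg (by omega), add_zero]
  · rw [if_neg h, if_pos (by omega), zero_add, mul_comm]

lemma TailBound.summable_eval {s M u : ℝ} {a : PowerSeries ℝ} (h : TailBound s a M) (hs : 1 < s)
    (hu : |u| ≤ 1) : Summable fun n => ‖coeff n a * u ^ n‖ := by
  refine .of_nonneg_of_le (fun _ => norm_nonneg _) (fun n => ?_) (h.summable_abs hs)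
  rw [norm_mul, norm_pow, Real.norm_eq_abs, Real.norm_eq_abs]
  exact mul_le_of_le_one_right (abs_nonneg _) (pow_le_one₀ (abs_nonneg _) hu)

lemma seriesEval_mul {s M N u : ℝ} {a b : PowerSeries ℝ} (ha : TailBound s a M)
    (hb : TailBound s b N) (hs : 1 < s) (hu : |u| ≤ 1) :
    seriesEval (a * b) u = seriesEval a u * seriesEval b u := by
  rw [seriesEval, seriesEval, seriesEval, tsum_mul_tsum_eq_tsum_sum_antidiagonal_of_summable_norm
    (ha.summable_eval hs hu) (hb.summable_eval hs hu)]
  congr with n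
  rw [coeff_mul, sum_mul]
  refine sum_congr rfl fun p hp => ?_
  rw [← mem_antidiagonal.1 hp, pow_add]
  ring

lemma seriesEval_one (u : ℝ) : seriesEval 1 u = 1 := by
  rw [seriesEval, tsum_eq_single 0] <;> simp +contextual [coeff_one]

lemma seriesEval_pow {s M u : ℝ} {a : PowerSeries ℝ} (ha : TailBound s a M) (hs : 1 < s)
    (hu : |u| ≤ 1) (m : ℕ) : seriesEval (a ^ m) u = seriesEval a u ^ m := by
  induction m with
  | zero => simpa using seriesEval_one u
  | succ m ih => rw [pow_succ, pow_succ, seriesEval_mul (ha.pow hs m) ha hs hu, ih]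

lemma seriesEval_one_right (a : PowerSeries ℝ) : seriesEval a 1 = ∑' n, coeff n a := by
  simp [seriesEval]

lemma HasTail.pow {s L : ℝ} {a : PowerSeries ℝ} (hs : 1 < s) (ha : HasTail s a L) (m : ℕ) :
    HasTail s (a ^ m) (m * seriesEval a 1 ^ (m - 1) * L) := by
  obtain ⟨M, hM⟩ := ha.exists_tailBound
  induction m with
  | zero =>
    refine tendsto_const_nhds.congr' ?_
    filter_upwards [eventually_ne_atTop 0] with n hn
    simp [coeff_one, hn]
  | succ m ih =>
    rw [pow_succ]
    convert! ih.mul hs ha using 1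
    rw [← seriesEval_one_right, ← seriesEval_one_right, seriesEval_pow hM hs (by simp)]
    rcases m with _ | m
    · simp
    · simp only [Nat.add_sub_cancel]
      push_cast
      ring

lemma HasTail.seriesComp {s L : ℝ} {a : PowerSeries ℝ} {e M : ℕ → ℝ} (hs : 1 < s)
    (ha : HasTail s a L) (hM : ∀ m, TailBound s (a ^ m) (M m))
    (he : Summable fun m => |e m| * M m) :
    HasTail s (seriesComp e a) (∑' m : ℕ, e m * (m * seriesEval a 1 ^ (m - 1) * L)) := by
  have key : Tendsto (fun n : ℕ => ∑' m, e m * (((n : ℝ) + 1) ^ s * coeff n (a ^ m))) atTop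
      (𝓝 (∑' m : ℕ, e m * (m * seriesEval a 1 ^ (m - 1) * L))) := by
    refine tendsto_tsum_of_dominated_convergence he
      (fun m => (ha.pow hs m).const_mul (e m)) (Eventually.of_forall fun n m => ?_)
    rw [norm_mul, norm_mul, Real.norm_eq_abs, Real.norm_eq_abs, Real.norm_eq_abs,
      abs_of_nonneg (a := ((n : ℝ) + 1) ^ s) (by positivity), mul_comm (((n : ℝ) + 1) ^ s)]
    gcongr
    exact hM m n
  refine key.congr fun n => ?_
  rw [_root_.seriesComp, coeff_mk, ← tsum_mul_left]
  congr with m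
  ring

lemma seriesEval_seriesComp {s A u : ℝ} {a : PowerSeries ℝ} {e M : ℕ → ℝ} (hs : 1 < s)
    (ha : TailBound s a A) (hM : ∀ m, TailBound s (a ^ m) (M m))
    (he : Summable fun m => |e m| * M m) (hu : |u| ≤ 1) :
    seriesEval (seriesComp e a) u = ∑' m, e m * seriesEval a u ^ m := by
  have hsum : Summable (Function.uncurry fun n m => e m * coeff n (a ^ m) * u ^ n) := by
    have h := (summable_nat_add_one_rpow_neg hs).mul_of_nonneg he (fun n => by positivity)
      (fun m => mul_nonneg (abs_nonneg _) (hM m).nonneg)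
    refine .of_norm_bounded h ?_
    rintro ⟨n, m⟩
    simp only [Function.uncurry]
    rw [norm_mul, norm_mul, norm_pow, Real.norm_eq_abs, Real.norm_eq_abs, Real.norm_eq_abs]
    calc |e m| * |coeff n (a ^ m)| * |u| ^ n ≤ |e m| * (M m * ((n : ℝ) + 1) ^ (-s)) * 1 := by
          gcongr
          · exact mul_nonneg (abs_nonneg _) (mul_nonneg (hM m).nonneg (by positivity))
          · exact (hM m).abs_le n
          · exact pow_le_one₀ (abs_nonneg _) hu
      _ = _ := by ring
  calc seriesEval (seriesComp e a) u = ∑' n, ∑' m, e m * coeff n (a ^ m) * u ^ n := by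
        simp only [seriesEval, seriesComp, coeff_mk, tsum_mul_right]
    _ = ∑' m, ∑' n, e m * coeff n (a ^ m) * u ^ n := hsum.tsum_comm.symm
    _ = _ := by
        congr with m
        rw [← seriesEval_pow ha hs hu, seriesEval, ← tsum_mul_left]
        simp only [mul_assoc]

lemma rpow_mul_exp_neg_le_Gamma {x R : ℝ} (hx : 0 ≤ x) (hR : 0 < R) :
    R ^ x * Real.exp (-R) ≤ Real.Gamma (x + 1) := by
  have hint := Real.GammaIntegral_convergent (s := x + 1) (by linarith)
  rw [Real.Gamma_eq_integral (by linarith), ← integral_exp_neg_Ioi,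
    ← MeasureTheory.integral_const_mul]
  calc ∫ y in Set.Ioi R, R ^ x * Real.exp (-y)
      ≤ ∫ y in Set.Ioi R, Real.exp (-y) * y ^ (x + 1 - 1) := by
        refine MeasureTheory.setIntegral_mono_on
          ((integrableOn_exp_neg_Ioi R).const_mul _)
          (hint.mono_set (Set.Ioi_subset_Ioi hR.le)) measurableSet_Ioi fun y hy => ?_
        rw [add_sub_cancel_right, mul_comm]
        have hy' : R ≤ y := le_of_lt hy
        gcongr
    _ ≤ _ := by
        refine MeasureTheory.setIntegral_mono_set hint ?_
          (Set.Ioi_subset_Ioi hR.le).eventuallyLE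
        filter_upwards [MeasureTheory.ae_restrict_mem measurableSet_Ioi] with y hy
        have hy' : 0 < y := hy
        simp only [Pi.zero_apply]
        positivity

/-- The Mittag-Leffler series converges absolutely everywhere. -/
lemma summable_pow_div_Gamma {β K : ℝ} (hβ : 0 < β) (hK : 0 ≤ K) :
    Summable fun m : ℕ => |1 / Real.Gamma (β * m + 1)| * K ^ m := by
  have hK1 : 0 < K + 1 := by linarith
  set R : ℝ := (2 * (K + 1)) ^ (1 / β) with hR
  have hR0 : 0 < R := by positivity
  have hRb : R ^ β = 2 * (K + 1) := by
    rw [hR, ← Real.rpow_mul (by positivity), one_div_mul_cancel hβ.ne', Real.rpow_one]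
  refine .of_nonneg_of_le (fun m => by positivity) (fun m => ?_)
    (summable_geometric_two.mul_left (Real.exp R))
  have hG : 0 < Real.Gamma (β * m + 1) := Real.Gamma_pos_of_pos (by positivity)
  have h := rpow_mul_exp_neg_le_Gamma (x := β * m) (by positivity) hR0
  rw [Real.rpow_mul hR0.le, hRb, Real.rpow_natCast, Real.exp_neg] at h
  rw [abs_of_pos (by positivity), one_div_mul_eq_div, div_le_iff₀ hG]
  calc K ^ m ≤ (K + 1) ^ m := by gcongr; linarith
    _ = Real.exp R * (1 / 2) ^ m * ((2 * (K + 1)) ^ m * (Real.exp R)⁻¹) := by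
        have := Real.exp_ne_zero R
        rw [mul_pow, one_div, inv_pow]
        field_simp
    _ ≤ _ := by gcongr

/-- The power series of `(1 - u)^α`. -/
noncomputable def oneSubRpowSeries (α : ℝ) : PowerSeries ℝ :=
  PowerSeries.mk fun n => (∏ j ∈ range n, ((j : ℝ) - α)) / n.factorial

lemma coeff_oneSubRpowSeries_succ (α : ℝ) (n : ℕ) :
    ((n : ℝ) + 1) * coeff (n + 1) (oneSubRpowSeries α) =
      (n - α) * coeff n (oneSubRpowSeries α) := by
  simp only [oneSubRpowSeries, coeff_mk, prod_range_succ, Nat.factorial_succ]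
  have := n.factorial_ne_zero
  push_cast
  field_simp

lemma seriesEval_oneSubRpowSeries {α u : ℝ} (hu : |u| < 1) :
    seriesEval (oneSubRpowSeries α) u = (1 - u) ^ α := by
  have h := (Real.one_add_rpow_hasFPowerSeriesOnBall_zero (a := α)).hasSum (y := -u)
    (by simpa [enorm_eq_nnnorm, ← NNReal.coe_lt_one] using hu)
  rw [zero_add, ← sub_eq_add_neg] at h
  rw [← h.tsum_eq, seriesEval]
  congr with n
  rw [binomialSeries_apply, List.ofFn_const, List.prod_replicate, smul_eq_mul, neg_pow, ← mul_assoc]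
  congr 1
  induction n with
  | zero => simp [oneSubRpowSeries]
  | succ n ih =>
    have h1 := coeff_oneSubRpowSeries_succ α n
    have h2 : ((n : ℝ) + 1) * Ring.choose α (n + 1) = (α - n) * Ring.choose α n := by
      rw [Ring.choose_eq_smul, Ring.choose_eq_smul, descPochhammer_succ_right]
      simp only [Polynomial.smeval_mul, Polynomial.smeval_sub, Polynomial.smeval_X,
        Polynomial.smeval_natCast, smul_eq_mul, Nat.factorial_succ]
      have := n.factorial_ne_zero
      simp
      field_simp
    have h3 : (n : ℝ) + 1 ≠ 0 := by positivity
    apply mul_left_cancel₀ h3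
    rw [h1, ih, pow_succ]
    linear_combination (-1) ^ n * h2

lemma hasTail_oneSubRpowSeries {α : ℝ} (hα : α ∈ Set.Ioo (0 : ℝ) 1) :
    HasTail (α + 1) (oneSubRpowSeries α) (-(α / Real.Gamma (1 - α))) := by
  obtain ⟨h0, h1⟩ := hα
  have hΓ : Real.Gamma (1 - α) = -α * Real.Gamma (-α) := by
    rw [← Real.Gamma_add_one (by linarith)]; ring_nf
  have hΓ1 : Real.Gamma (1 - α) ≠ 0 := (Real.Gamma_pos_of_pos (by linarith)).ne'
  have hΓ0 : Real.Gamma (-α) ≠ 0 := fun h => hΓ1 (by rw [hΓ, h, mul_zero])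
  rw [HasTail, ← tendsto_add_atTop_iff_nat 1]
  have t1 : Tendsto (fun k : ℕ => 1 + 1 * (1 / ((k : ℝ) + 1))) atTop (𝓝 (1 + 1 * 0)) :=
    (tendsto_one_div_add_atTop_nhds_zero_nat.const_mul _).const_add 1
  have t2 : Tendsto (fun k : ℕ => 1 + 2 * (1 / (k : ℝ))) atTop (𝓝 (1 + 2 * 0)) :=
    (tendsto_one_div_atTop_nhds_zero_nat.const_mul _).const_add 1
  have t3 := t2.rpow_const (p := α) (Or.inl (by simp))
  have t4 := (t1.mul t3).mul ((Real.GammaSeq_tendsto_Gamma (-α)).inv₀ hΓ0)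
  have e : (1 + 1 * 0) * (1 + 2 * 0 : ℝ) ^ α * (Real.Gamma (-α))⁻¹ =
      -(α / Real.Gamma (1 - α)) := by
    rw [hΓ]; simp; field_simp
  rw [e] at t4
  refine t4.congr' ?_
  filter_upwards [eventually_gt_atTop 0] with k hk
  have hk' : (0 : ℝ) < k := by exact_mod_cast hk
  rw [Real.GammaSeq, oneSubRpowSeries, coeff_mk, Nat.factorial_succ, inv_div,
    Real.rpow_neg hk'.le, show 1 + 2 * (1 / (k : ℝ)) = (k + 2) / k by field_simp,
    Real.div_rpow (by positivity) hk'.le]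
  push_cast
  rw [show (k : ℝ) + 1 + 1 = k + 2 by ring, Real.rpow_add_one (by positivity)]
  have hp : ∏ j ∈ range (k + 1), (-α + (j : ℝ)) = ∏ j ∈ range (k + 1), ((j : ℝ) - α) :=
    prod_congr rfl fun j _ => by ring
  rw [hp]
  have := k.factorial_ne_zero
  have : (k : ℝ) ^ α ≠ 0 := by positivity
  field_simp
  ring

lemma seriesEval_oneSubRpowSeries_one {α : ℝ} (hα : α ∈ Set.Ioo (0 : ℝ) 1) :
    seriesEval (oneSubRpowSeries α) 1 = 0 := by
  obtain ⟨M, hM⟩ := (hasTail_oneSubRpowSeries hα).exists_tailBound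
  have hsum := (hM.summable_abs (by linarith [hα.1])).of_abs.hasSum.tendsto_sum_nat
  rw [seriesEval_one_right]
  refine tendsto_nhds_unique hsum ?_
  have hpart : ∀ N : ℕ, α * ∑ n ∈ range N, coeff n (oneSubRpowSeries α) =
      -(N * coeff N (oneSubRpowSeries α)) := by
    intro N
    induction N with
    | zero => simp
    | succ N ih =>
      rw [sum_range_succ, mul_add, ih]
      push_cast
      linear_combination coeff_oneSubRpowSeries_succ α N
  have hlim : Tendsto (fun N : ℕ => M / α * ((N : ℝ) + 1) ^ (-α)) atTop (𝓝 (M / α * 0)) :=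
    ((tendsto_rpow_neg_atTop hα.1).comp
      (tendsto_atTop_add_const_right _ 1 tendsto_natCast_atTop_atTop)).const_mul _
  rw [mul_zero] at hlim
  refine squeeze_zero_norm (fun N => ?_) hlim
  have h2 : ∑ n ∈ range N, coeff n (oneSubRpowSeries α) =
      -(N * coeff N (oneSubRpowSeries α)) / α := by
    rw [← hpart, mul_div_cancel_left₀ _ hα.1.ne']
  have h3 := hM.abs_le N
  rw [h2, Real.norm_eq_abs, abs_div, abs_neg, abs_mul, Nat.abs_cast, abs_of_pos hα.1,
    div_mul_eq_mul_div]
  refine div_le_div_of_nonneg_right ?_ hα.1.le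
  calc (N : ℝ) * |coeff N (oneSubRpowSeries α)|
      ≤ (N + 1) * (M * ((N : ℝ) + 1) ^ (-(α + 1))) := by gcongr; linarith
    _ = M * ((N : ℝ) + 1) ^ (-α) := by
      rw [show -α = -(α + 1) + 1 by ring, Real.rpow_add_one (by positivity)]
      ring

/-- The generating series `1 - (1 - u)^α` of the Sibuya distribution. -/
noncomputable def sibuyaSeries (α : ℝ) : PowerSeries ℝ := 1 - oneSubRpowSeries α

lemma coeff_sibuyaSeries_nonneg {α : ℝ} (hα : α ∈ Set.Ioo (0 : ℝ) 1) (n : ℕ) :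
    0 ≤ coeff n (sibuyaSeries α) := by
  rcases n with _ | n
  · simp [sibuyaSeries, oneSubRpowSeries]
  · simp only [sibuyaSeries, map_sub, coeff_one, oneSubRpowSeries, coeff_mk, prod_range_succ']
    have : 0 ≤ ∏ j ∈ range n, (((j + 1 : ℕ) : ℝ) - α) :=
      prod_nonneg fun j _ => by push_cast; linarith [hα.2, (Nat.cast_nonneg j : (0 : ℝ) ≤ j)]
    have h2 := hα.1
    simp only [Nat.add_eq_zero_iff, one_ne_zero, and_false, if_false, Nat.cast_zero, zero_sub,
      mul_neg, neg_div, neg_neg]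
    positivity

lemma coeff_sibuyaSeries_pow_nonneg {α : ℝ} (hα : α ∈ Set.Ioo (0 : ℝ) 1) (m n : ℕ) :
    0 ≤ coeff n (sibuyaSeries α ^ m) := by
  induction m generalizing n with
  | zero => rw [pow_zero, coeff_one]; split_ifs <;> simp
  | succ m ih =>
    rw [pow_succ, coeff_mul]
    exact sum_nonneg fun p _ => mul_nonneg (ih _) (coeff_sibuyaSeries_nonneg hα _)

lemma hasTail_sibuyaSeries {α : ℝ} (hα : α ∈ Set.Ioo (0 : ℝ) 1) :
    HasTail (α + 1) (sibuyaSeries α) (α / Real.Gamma (1 - α)) := by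
  have h := (hasTail_oneSubRpowSeries hα).neg
  rw [neg_neg] at h
  refine h.congr' ?_
  filter_upwards [eventually_ne_atTop 0] with n hn
  simp [sibuyaSeries, coeff_one, hn]

lemma seriesEval_sibuyaSeries {α : ℝ} (hα : α ∈ Set.Ioo (0 : ℝ) 1) {u : ℝ} (hu : |u| ≤ 1) :
    seriesEval (sibuyaSeries α) u = 1 - seriesEval (oneSubRpowSeries α) u := by
  obtain ⟨M, hM⟩ := (hasTail_oneSubRpowSeries hα).exists_tailBound
  have hs : 1 < α + 1 := by linarith [hα.1]
  rw [← seriesEval_one u, seriesEval, seriesEval, seriesEval,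
    ← ((tailBound_one _).summable_eval hs hu).of_norm.tsum_sub (hM.summable_eval hs hu).of_norm]
  simp only [sibuyaSeries, map_sub, sub_mul]

lemma exists_tailBound_sibuyaSeries_pow {α : ℝ} (hα : α ∈ Set.Ioo (0 : ℝ) 1) :
    ∃ M, ∀ m : ℕ, TailBound (α + 1) (sibuyaSeries α ^ m) (M * ((m : ℝ) + 1) ^ (3 : ℕ)) := by
  obtain ⟨M, hM⟩ := (hasTail_sibuyaSeries hα).exists_tailBound
  have hs : 1 < α + 1 := by linarith [hα.1]
  refine ⟨max M 1, fun m n => ?_⟩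
  have h : TailBound (α + 1) (sibuyaSeries α) (max M 1) := fun n => (hM n).trans (le_max_left _ _)
  refine (h.pow_of_tsum_abs_le_one (le_max_right _ _) hs (fun k => ?_) m n).trans ?_
  · simp only [abs_of_nonneg (coeff_sibuyaSeries_pow_nonneg hα k _)]
    rw [← seriesEval_one_right, seriesEval_pow hM hs (by simp),
      seriesEval_sibuyaSeries hα (by simp), seriesEval_oneSubRpowSeries_one hα]
    simp
  · rw [← Real.rpow_natCast]
    gcongr
    · linarith [(Nat.cast_nonneg m : (0 : ℝ) ≤ m)]
    · push_cast; linarith [hα.2]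

/-- If `f` is the sum of the power series `a` near `0`, its Taylor coefficients are those of `a`. -/
lemma iteratedDeriv_div_factorial_eq_coeff {f : ℝ → ℝ} {a : PowerSeries ℝ}
    (h : ∀ᶠ u in 𝓝 0, HasSum (fun n => coeff n a * u ^ n) (f u)) (n : ℕ) :
    1 / (n.factorial : ℝ) * iteratedDeriv n f 0 = coeff n a := by
  have hf : HasFPowerSeriesAt f (.ofScalars ℝ fun n => coeff n a) 0 := by
    rw [hasFPowerSeriesAt_iff]
    filter_upwards [h] with u hu
    simpa [FormalMultilinearSeries.coeff_ofScalars, mul_comm] using hu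
  have h2 := hf.analyticAt.hasFPowerSeriesAt.eq_formalMultilinearSeries hf
  have h3 := congrFun ((FormalMultilinearSeries.ofScalars_series_eq_iff ℝ _ _).1 h2) n
  rw [← h3, one_div_mul_eq_div]

/-- Taylor coefficients at `0` of `x ↦ -c (1 - x) / (lam + 1 - x)`. -/
noncomputable def exponentCoeff (c lam : ℝ) (m : ℕ) : ℝ :=
  c * lam * (lam + 1)⁻¹ ^ (m + 1) - if m = 0 then c else 0

lemma hasSum_exponentCoeff {c lam x : ℝ} (hlam : 0 < lam) (hx : |x| < lam + 1) :
    HasSum (fun m => exponentCoeff c lam m * x ^ m) (-(c * (1 - x) / (lam + (1 - x)))) := by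
  have hx' : |(lam + 1)⁻¹ * x| < 1 := by
    rw [abs_mul, abs_of_pos (by positivity), inv_mul_lt_iff₀ (by positivity)]
    linarith
  have h1 := (hasSum_geometric_of_abs_lt_one hx').mul_left (c * lam * (lam + 1)⁻¹)
  have h2 := h1.sub (hasSum_ite_eq (0 : ℕ) c)
  have hne : lam + 1 - x ≠ 0 := by linarith [(abs_lt.1 hx).2]
  convert! h2 using 1
  · ext m
    rw [exponentCoeff, mul_pow, pow_succ]
    rcases eq_or_ne m 0 with rfl | hm
    · simp
    · simp only [if_neg hm]
      ring
  · have : 1 - (lam + 1)⁻¹ * x = (lam + 1 - x) / (lam + 1) := by field_simp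
    rw [this]
    have : lam + (1 - x) ≠ 0 := by rwa [← add_sub_assoc]
    field_simp
    ring

lemma summable_exponentCoeff_mul {c lam M : ℝ} (hlam : 0 < lam) :
    Summable fun m : ℕ => |exponentCoeff c lam m| * (M * ((m : ℝ) + 1) ^ 3) := by
  have hr : ‖(lam + 1)⁻¹‖ < 1 := by
    rw [Real.norm_eq_abs, abs_of_pos (by positivity)]
    exact inv_lt_one_of_one_lt₀ (by linarith)
  have h := (summable_nat_add_iff (f := fun n : ℕ => (n : ℝ) ^ 3 * (lam + 1)⁻¹ ^ n) 2).2
    (summable_pow_mul_geometric_of_norm_lt_one 3 hr)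
  refine (summable_nat_add_iff 1).1 ((h.mul_left (|c * lam| * M)).congr fun m => ?_)
  have : 0 ≤ (lam + 1)⁻¹ := by positivity
  rw [exponentCoeff, if_neg (by simp), sub_zero, abs_mul (c * lam), abs_of_nonneg (pow_nonneg this _)]
  push_cast
  ring

lemma tsum_exponentCoeff_mul {c lam L : ℝ} (hlam : 0 < lam) :
    ∑' m : ℕ, exponentCoeff c lam m * (m * 1 ^ (m - 1) * L) = c / lam * L := by
  have hr : ‖(lam + 1)⁻¹‖ < 1 := by
    rw [Real.norm_eq_abs, abs_of_pos (by positivity)]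
    exact inv_lt_one_of_one_lt₀ (by linarith)
  have h := (tsum_coe_mul_geometric_of_norm_lt_one hr)
  have h2 : ∀ m : ℕ, exponentCoeff c lam m * (m * 1 ^ (m - 1) * L) =
      c * lam * (lam + 1)⁻¹ * L * (m * (lam + 1)⁻¹ ^ m) := by
    intro m
    rw [exponentCoeff]
    rcases eq_or_ne m 0 with rfl | hm
    · simp
    · rw [if_neg hm]
      ring
  simp_rw [h2]
  rw [tsum_mul_left, h]
  have : 1 - (lam + 1)⁻¹ = lam / (lam + 1) := by field_simp; ring
  rw [this]
  field_simp

/-- For `α ∈ (0,1)`, `β ∈ (0,1]`, `λ > 0`, `ξ > 0`, `t > 0`: the state probabilities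
`p_n(t)` of the space-time Mittag-Leffler process — given by the `n`-th Taylor
coefficient at `u = 0` of `u ↦ E_β(−ξt^β(λ+1)(1−u)^α/(λ+(1−u)^α))` — have the
fat-tailed asymptotics `lim_{n→∞} n^{α+1} p_n(t) = α(λ+1)ξt^β/(λΓ(1−α)Γ(1+β))`. -/
theorem space_time_mittagLeffler_tail_asymptotics (α β lam ξ t : ℝ)
    (hα : α ∈ Set.Ioo (0 : ℝ) 1) (hβ : β ∈ Set.Ioc (0 : ℝ) 1)
    (hlam : 0 < lam) (hξ : 0 < ξ) (ht : 0 < t) :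
    Filter.Tendsto (fun n : ℕ => (n : ℝ) ^ (α + 1) *
        ((1 / (n.factorial : ℝ)) * iteratedDeriv n
          (fun u : ℝ => mittagLefflerOne β
            (-(ξ * t ^ β * (lam + 1) * (1 - u) ^ α / (lam + (1 - u) ^ α)))) 0))
      Filter.atTop
      (nhds (α * (lam + 1) * ξ * t ^ β / (lam * Real.Gamma (1 - α) * Real.Gamma (1 + β)))) := by
  have hs : 1 < α + 1 := by linarith [hα.1]
  set c := ξ * t ^ β * (lam + 1) with hc
  obtain ⟨M, hM⟩ := exists_tailBound_sibuyaSeries_pow hα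
  have hq : TailBound (α + 1) (sibuyaSeries α) (M * (((1 : ℕ) : ℝ) + 1) ^ 3) := by
    simpa only [pow_one] using hM 1
  have he := summable_exponentCoeff_mul (c := c) (M := M) hlam
  set H := seriesComp (exponentCoeff c lam) (sibuyaSeries α)
  have hq1 : seriesEval (sibuyaSeries α) 1 = 1 := by
    rw [seriesEval_sibuyaSeries hα (by simp), seriesEval_oneSubRpowSeries_one hα, sub_zero]
  have hH := (hasTail_sibuyaSeries hα).seriesComp hs hM he
  rw [hq1, tsum_exponentCoeff_mul hlam] at hH
  have hH1 : seriesEval H 1 = 0 := by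
    rw [seriesEval_seriesComp hs hq hM he (by simp), hq1,
      (hasSum_exponentCoeff hlam (by rw [abs_one]; linarith)).tsum_eq]
    simp
  have hHu : ∀ᶠ u : ℝ in 𝓝 0, seriesEval H u = -(c * (1 - u) ^ α / (lam + (1 - u) ^ α)) := by
    have hcont : ContinuousAt (fun u : ℝ => |1 - (1 - u) ^ α|) 0 :=
      (continuousAt_const.sub ((continuousAt_const.sub continuousAt_id).rpow_const
        (Or.inl (by simp)))).abs
    have hev : ∀ᶠ u : ℝ in 𝓝 0, |1 - (1 - u) ^ α| < lam + 1 :=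
      hcont.eventually (eventually_lt_nhds (by simp; linarith))
    filter_upwards [hev, eventually_abs_sub_lt (0 : ℝ) one_pos] with u hu hu1
    rw [sub_zero] at hu1
    rw [seriesEval_seriesComp hs hq hM he hu1.le, seriesEval_sibuyaSeries hα hu1.le,
      seriesEval_oneSubRpowSeries hu1, (hasSum_exponentCoeff hlam hu).tsum_eq, sub_sub_cancel]
  obtain ⟨B, hB⟩ := hH.exists_tailBound
  have hB0 := hB.nonneg
  have hZ : 0 ≤ ∑' n : ℕ, ((n : ℝ) + 1) ^ (-(α + 1)) := tsum_nonneg fun n => by positivity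
  have hg := summable_pow_div_Gamma (K := 2 * 2 ^ (α + 1) *
    (∑' n : ℕ, ((n : ℝ) + 1) ^ (-(α + 1))) * B) hβ.1 (by positivity)
  have hp := hH.seriesComp hs (hB.pow hs) hg
  set p := seriesComp (fun m : ℕ => 1 / Real.Gamma (β * m + 1)) H
  have hpu : ∀ᶠ u : ℝ in 𝓝 0, HasSum (fun n => coeff n p * u ^ n)
      (mittagLefflerOne β (-(c * (1 - u) ^ α / (lam + (1 - u) ^ α)))) := by
    obtain ⟨P, hP⟩ := hp.exists_tailBound
    filter_upwards [hHu, eventually_abs_sub_lt (0 : ℝ) one_pos] with u hu hu1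
    rw [sub_zero] at hu1
    have h1 := (hP.summable_eval hs hu1.le).of_norm.hasSum
    have h2 := seriesEval_seriesComp hs hB (hB.pow hs) hg hu1.le
    rw [← hu]
    convert! h1 using 1
    rw [← seriesEval, h2, mittagLefflerOne]
    congr with m
    ring
  simp_rw [iteratedDeriv_div_factorial_eq_coeff hpu]
  rw [hH1, tsum_eq_single 1] at hp
  · have hr := (tendsto_natCast_div_add_atTop (1 : ℝ)).rpow_const (p := α + 1) (Or.inl one_ne_zero)
    have h := hr.mul hp
    have e : (1 : ℝ) ^ (α + 1) * (1 / Real.Gamma (β * (1 : ℕ) + 1) *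
        ((1 : ℕ) * 0 ^ (1 - 1) * (c / lam * (α / Real.Gamma (1 - α))))) =
        α * (lam + 1) * ξ * t ^ β / (lam * Real.Gamma (1 - α) * Real.Gamma (1 + β)) := by
      rw [Nat.cast_one, mul_one, add_comm β, hc, Real.one_rpow]
      simp only [Nat.sub_self, pow_zero]
      field_simp
    rw [e] at h
    refine h.congr fun n => ?_
    rw [Real.div_rpow (by positivity) (by positivity), ← mul_assoc,
      div_mul_cancel₀ _ (by positivity)]
  · intro m hm
    rcases m with _ | _ | m
    · simp
    · exact absurd rfl hm
    · simp
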